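/- arXiv:2603.18674 — 2 statements merged into one kernel-verified Lean document; each statement's English description precedes it below -/
import Mathlib

section
/- Let G be a finite simple graph and let f be a 2-tone 5-coloring of G. Then any two vertices of G at distance exactly two share exactly one common color; that is, every 2-tone 5-coloring of G is a good 2-tone 5-coloring. -/
/-- A `t`-tone `k`-coloring of a simple graph `G`: each vertex gets a set of `t`
distinct colors from `{1,…,k}`, and any two distinct vertices in the same
connected component share fewer colors than their distance. -/
def IsTToneColoring {V : Type*} (G : SimpleGraph V) (t k : ℕ) (f : V → Finset ℕ) : Prop :=
  (∀ v, f v ⊆ Finset.Icc 1 k ∧ (f v).card = t) ∧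
  ∀ u v : V, u ≠ v → G.Reachable u v → ((f u) ∩ (f v)).card < G.dist u v

/-- The `t`-tone chromatic number: the least `k` admitting a `t`-tone `k`-coloring. -/
noncomputable def toneNumber {V : Type*} (G : SimpleGraph V) (t : ℕ) : ℕ :=
  sInf {k | ∃ f : V → Finset ℕ, IsTToneColoring G t k f}

theorem card_add_card_add_card_le_card_add_card_inter {α : Type*} [DecidableEq α]
    {A B C S : Finset α} (hA : A ⊆ S) (hB : B ⊆ S) (hC : C ⊆ S) (hAC : Disjoint A C)
    (hBC : Disjoint B C) :
    A.card + B.card + C.card ≤ S.card + (A ∩ B).card :=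
  have hABC : Disjoint (A ∪ B) C := Finset.disjoint_union_left.2 ⟨hAC, hBC⟩
  calc
    A.card + B.card + C.card = (A ∪ B).card + C.card + (A ∩ B).card := by
      rw [← Finset.card_union_add_card_inter, add_right_comm]
    _ = ((A ∪ B) ∪ C).card + (A ∩ B).card := by rw [Finset.card_union_of_disjoint hABC]
    _ ≤ S.card + (A ∩ B).card := by
      gcongr
      exact Finset.union_subset (Finset.union_subset hA hB) hC

section Coloring

variable {V : Type*} {G : SimpleGraph V} {t k : ℕ} {f : V → Finset ℕ} {u v w : V}

theorem commonNeighbors_nonempty_of_dist_eq_two (h : G.dist u v = 2) :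
    (G.commonNeighbors u v).Nonempty := by
  have hreach : G.Reachable u v := .of_dist_ne_zero (h ▸ two_ne_zero)
  have hedist : G.edist u v = 2 := by rw [← hreach.coe_dist_eq_edist, h, Nat.cast_ofNat]
  exact (SimpleGraph.edist_eq_two_iff.1 hedist).2.2

namespace IsTToneColoring

theorem card_inter_lt_dist (hf : IsTToneColoring G t k f) (h : G.dist u v ≠ 0) :
    (f u ∩ f v).card < G.dist u v :=
  have ⟨hne, hreach⟩ := SimpleGraph.dist_ne_zero_iff_ne_and_reachable.1 h
  hf.2 u v hne hreach

theorem disjoint_of_adj (hf : IsTToneColoring G t k f) (h : G.Adj u v) :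
    Disjoint (f u) (f v) := by
  have hdist : G.dist u v = 1 := SimpleGraph.dist_eq_one_iff_adj.2 h
  have hcard := hf.card_inter_lt_dist (hdist ▸ one_ne_zero)
  rwa [hdist, Nat.lt_one_iff, Finset.card_eq_zero, ← Finset.disjoint_iff_inter_eq_empty] at hcard

theorem three_mul_le_add_card_inter (hf : IsTToneColoring G t k f)
    (hw : w ∈ G.commonNeighbors u v) : 3 * t ≤ k + (f u ∩ f v).card := by
  obtain ⟨huw, hvw⟩ := G.mem_commonNeighbors.1 hw
  have hcard := card_add_card_add_card_le_card_add_card_inter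
    (hf.1 u).1 (hf.1 v).1 (hf.1 w).1 (hf.disjoint_of_adj huw) (hf.disjoint_of_adj hvw)
  rw [(hf.1 u).2, (hf.1 v).2, (hf.1 w).2, Nat.card_Icc, Nat.add_sub_cancel] at hcard
  linarith

end IsTToneColoring

/-- A common neighbor of `u` and `v` takes up `t` colors, so `u` and `v` draw their `t`-sets from
the remaining `k - t < 2 * t` colors and must overlap. -/
theorem stmt4_general (hf : IsTToneColoring G t k f) (hk : k < 3 * t) (h : G.dist u v = 2) :
    (f u ∩ f v).card = 1 := by
  obtain ⟨w, hw⟩ := commonNeighbors_nonempty_of_dist_eq_two h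
  have hlower : 3 * t ≤ k + (f u ∩ f v).card := hf.three_mul_le_add_card_inter hw
  have hupper : (f u ∩ f v).card < 2 := h ▸ hf.card_inter_lt_dist (h ▸ two_ne_zero)
  lia

end Coloring

/-- Every 2-tone 5-coloring of a finite simple graph is a good 2-tone 5-coloring:
any two vertices at distance exactly two share exactly one common color. -/
theorem stmt4 {V : Type*} [Fintype V] (G : SimpleGraph V) (f : V → Finset ℕ)
    (hf : IsTToneColoring G 2 5 f) :
    ∀ u v : V, G.dist u v = 2 → ((f u) ∩ (f v)).card = 1 :=
  fun _ _ => stmt4_general hf (by norm_num)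
end

section
/- Every finite tree with at least two vertices and maximum degree at most 3 admits a 2-tone 5-coloring. -/
/-!
A 2-tone coloring with color set `S` amounts to a locally injective homomorphism into the Kneser
graph of 2-subsets of `S`: adjacent vertices get disjoint pairs, and vertices with a common neighbor
get distinct pairs. For five colors this is the Petersen graph, which is 3-regular.

A forest maps locally injectively into any graph whose neighborhoods are at least as large as those
of the forest: walk away from a root of each component, at every vertex injecting its neighborhood
so that its parent is sent where it was already placed.
-/

open SimpleGraph

section Transport

variable {V : Type*} {G : SimpleGraph V} {S : V → Type*}

/-- Pushes a value of `S u` along a walk from `u` to `v` by applying `step` to its edges in order.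
It turns an edge-by-edge choice of labels into a labeling of everything reachable from a root. -/
def transportAlong (step : ∀ ⦃u v : V⦄, G.Adj u v → S u → S v) {u v : V} : G.Walk u v → S u → S v
  | .nil, a => a
  | .cons h p, a => transportAlong step p (step h a)

lemma transportAlong_concat (step : ∀ ⦃u v : V⦄, G.Adj u v → S u → S v) {u v w : V}
    (p : G.Walk u v) (h : G.Adj v w) (a : S u) :
    transportAlong step (p.concat h) a = step h (transportAlong step p a) := by
  induction p with
  | nil => rfl
  | cons _ _ ih => exact ih h _

variable {R : ∀ ⦃u v : V⦄, S u → S v → Prop}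

lemma rel_transportAlong_of_isPath (hG : G.IsAcyclic)
    (hsymm : ∀ ⦃u v⦄ {a : S u} {b : S v}, R a b → R b a)
    {step : ∀ ⦃u v : V⦄, G.Adj u v → S u → S v}
    (hstep : ∀ ⦃u v⦄ (h : G.Adj u v) (a : S u), R a (step h a))
    {r u v : V} {p : G.Walk r u} {q : G.Walk r v} (hp : p.IsPath) (hq : q.IsPath)
    (huv : G.Adj u v) (a : S r) : R (transportAlong step p a) (transportAlong step q a) := by
  by_cases hu : u ∈ q.support
  · rw [hG.path_concat hp hq huv hu, transportAlong_concat]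
    exact hstep huv _
  · have hv : v ∈ p.support := hG.mem_support_of_ne_mem_support_of_adj_of_isPath hp hq huv hu
    rw [hG.path_concat hq hp huv.symm hv, transportAlong_concat]
    exact hsymm (hstep huv.symm _)

theorem exists_forall_adj_rel_of_isAcyclic [∀ v, Nonempty (S v)] (hG : G.IsAcyclic)
    (hsymm : ∀ ⦃u v⦄ {a : S u} {b : S v}, R a b → R b a)
    (hext : ∀ ⦃u v⦄, G.Adj u v → ∀ a : S u, ∃ b : S v, R a b) :
    ∃ s : ∀ v, S v, ∀ ⦃u v⦄, G.Adj u v → R (s u) (s v) := by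
  choose step hstep using hext
  let root (v : V) : V := (G.connectedComponentMk v).out
  have root_eq {u v : V} (h : G.Adj u v) : root u = root v :=
    congrArg Quot.out (ConnectedComponent.sound h.reachable)
  have exists_path (v : V) : ∃ p : G.Walk (root v) v, p.IsPath :=
    (ConnectedComponent.exact (Quot.out_eq (G.connectedComponentMk v))).exists_isPath
  choose path isPath_path using exists_path
  let a₀ (v : V) : S v := Classical.arbitrary (S v)
  refine ⟨fun v => transportAlong step (path v) (a₀ (root v)), fun u v huv => ?_⟩
  have rel_of_eq {r r' : V} (hr : r = r') {p : G.Walk r u} {q : G.Walk r' v} (hp : p.IsPath)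
      (hq : q.IsPath) : R (transportAlong step p (a₀ r)) (transportAlong step q (a₀ r')) := by
    subst hr
    exact rel_transportAlong_of_isPath hG hsymm hstep hp hq huv _
  exact rel_of_eq (root_eq huv) (isPath_path u) (isPath_path v)

end Transport

section LocallyInjective

variable {V W : Type*} {G : SimpleGraph V} {H : SimpleGraph W}

/-- A candidate for the behavior at `v` of a locally injective homomorphism from `G` to `H`: an
image `w` of `v` together with an injection of the neighborhood of `v` into that of `w`. -/
abbrev StarEmbedding (G : SimpleGraph V) (H : SimpleGraph W) (v : V) : Type _ :=
  Σ w : W, G.neighborSet v ↪ H.neighborSet w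

/-- Star embeddings at `u` and `v` are compatible if, in case `u` and `v` are adjacent, each sends
the center of the other to where the other sends it. -/
def StarEmbedding.Compatible ⦃u v : V⦄ (a : StarEmbedding G H u) (b : StarEmbedding G H v) : Prop :=
  ∀ h : G.Adj u v, (a.2 ⟨v, h⟩ : W) = b.1 ∧ (b.2 ⟨u, h.symm⟩ : W) = a.1

lemma StarEmbedding.exists_compatible (hGH : ∀ v w, Nonempty (G.neighborSet v ↪ H.neighborSet w))
    {u v : V} (huv : G.Adj u v) (a : StarEmbedding G H u) :
    ∃ b : StarEmbedding G H v, a.Compatible b := by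
  classical
  obtain ⟨w, e⟩ := a
  obtain ⟨e'⟩ := hGH v (e ⟨v, huv⟩)
  let u' : G.neighborSet v := ⟨u, huv.symm⟩
  let w' : H.neighborSet (e ⟨v, huv⟩) := ⟨w, (e ⟨v, huv⟩).2.symm⟩
  exact ⟨⟨e ⟨v, huv⟩, e'.setValue u' w'⟩,
    fun _ => ⟨rfl, congrArg Subtype.val (e'.setValue_eq u' w')⟩⟩

theorem exists_hom_injOn_neighborSet_of_isAcyclic [Nonempty W] (hG : G.IsAcyclic)
    (hGH : ∀ v w, Nonempty (G.neighborSet v ↪ H.neighborSet w)) :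
    ∃ f : G →g H, ∀ v, Set.InjOn f (G.neighborSet v) := by
  have (v : V) : Nonempty (StarEmbedding G H v) :=
    ⟨⟨Classical.arbitrary W, (hGH v _).some⟩⟩
  obtain ⟨s, hs⟩ := exists_forall_adj_rel_of_isAcyclic hG
    (R := StarEmbedding.Compatible (G := G) (H := H))
    (fun _ _ _ _ hab h => (hab h.symm).symm)
    (fun _ _ huv => StarEmbedding.exists_compatible hGH huv)
  have apply_eq {u v : V} (h : G.Adj u v) : ((s u).2 ⟨v, h⟩ : W) = (s v).1 := (hs h h).1
  refine ⟨⟨fun v => (s v).1, fun {u v} huv => ?_⟩, fun u v huv w huw hvw => ?_⟩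
  · rw [← apply_eq huv]
    exact ((s u).2 ⟨v, huv⟩).2
  · have heq : (s u).2 ⟨v, huv⟩ = (s u).2 ⟨w, huw⟩ :=
      Subtype.ext ((apply_eq huv).trans (hvw.trans (apply_eq huw).symm))
    exact congrArg Subtype.val ((s u).2.injective heq)

end LocallyInjective

section Kneser

variable {α : Type*}

/-- The Kneser graph on the `t`-element subsets of `S`, in which disjoint sets are adjacent. The
condition `A ≠ B` only matters for `t = 0`, where it removes the loop at `∅`. -/
def kneserGraph (S : Finset α) (t : ℕ) : SimpleGraph (S.powersetCard t) where
  Adj A B := A ≠ B ∧ Disjoint A.1 B.1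
  symm := ⟨fun _ _ h => ⟨h.1.symm, h.2.symm⟩⟩
  loopless := ⟨fun _ h => h.1 rfl⟩

lemma map_neighborFinset_kneserGraph [DecidableEq α] {S : Finset α} {t : ℕ} (ht : t ≠ 0)
    (A : S.powersetCard t) [Fintype ((kneserGraph S t).neighborSet A)] :
    ((kneserGraph S t).neighborFinset A).map (Function.Embedding.subtype _) =
      (S \ A.1).powersetCard t := by
  ext B
  simp only [Finset.mem_map, mem_neighborFinset, Function.Embedding.subtype_apply,
    Finset.mem_powersetCard, Finset.subset_sdiff]
  constructor
  · rintro ⟨⟨B, hB⟩, ⟨-, hAB⟩, rfl⟩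
    obtain ⟨hBS, hBt⟩ := Finset.mem_powersetCard.mp hB
    exact ⟨⟨hBS, hAB.symm⟩, hBt⟩
  · rintro ⟨⟨hBS, hBA⟩, hBt⟩
    refine ⟨⟨B, Finset.mem_powersetCard.mpr ⟨hBS, hBt⟩⟩, ⟨?_, hBA.symm⟩, rfl⟩
    rintro rfl
    exact ht (by rw [← hBt, Finset.disjoint_self_iff_empty _ |>.mp hBA, Finset.card_empty])

lemma degree_kneserGraph {S : Finset α} {t : ℕ} (ht : t ≠ 0) (A : S.powersetCard t)
    [Fintype ((kneserGraph S t).neighborSet A)] :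
    (kneserGraph S t).degree A = (S.card - t).choose t := by
  classical
  obtain ⟨hAS, hAt⟩ := Finset.mem_powersetCard.mp A.2
  rw [← card_neighborFinset_eq_degree, ← Finset.card_map, map_neighborFinset_kneserGraph ht,
    Finset.card_powersetCard, Finset.card_sdiff_of_subset hAS, hAt]

end Kneser

section Tone

variable {V : Type*} {G : SimpleGraph V} {k : ℕ}

lemma two_lt_dist_of_commonNeighbors_eq_empty {u v : V} (hne : u ≠ v) (hr : G.Reachable u v)
    (hadj : ¬G.Adj u v) (hcommon : G.commonNeighbors u v = ∅) : 2 < G.dist u v := by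
  have h : 2 < G.edist u v := two_lt_edist_iff.mpr ⟨hne, hadj, hcommon⟩
  rw [← hr.coe_dist_eq_edist] at h
  exact_mod_cast h

lemma card_inter_lt_of_ne {α : Type*} [DecidableEq α] {A B : Finset α} {t : ℕ} (hA : A.card = t)
    (hB : B.card = t) (hne : A ≠ B) : (A ∩ B).card < t := by
  refine (hA ▸ Finset.card_le_card Finset.inter_subset_left).lt_of_ne fun h => hne ?_
  have hAB : A ⊆ B := Finset.inter_eq_left.mp
    (Finset.eq_of_subset_of_card_le Finset.inter_subset_left (by rw [h, hA]))
  exact Finset.eq_of_subset_of_card_le hAB (by rw [hA, hB])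

lemma isTToneColoring_two_of_hom_kneserGraph (f : G →g kneserGraph (Finset.Icc 1 k) 2)
    (hf : ∀ v, Set.InjOn f (G.neighborSet v)) : IsTToneColoring G 2 k (fun v => (f v).1) := by
  have hcard (v : V) : (f v).1.card = 2 := (Finset.mem_powersetCard.mp (f v).2).2
  refine ⟨fun v => Finset.mem_powersetCard.mp (f v).2, fun u v hne hr => ?_⟩
  by_cases hadj : G.Adj u v
  · rw [Finset.disjoint_iff_inter_eq_empty.mp (f.map_adj hadj).2, Finset.card_empty]
    exact hr.pos_dist_of_ne hne
  have hdist : 1 < G.dist u v := hr.one_lt_dist_of_ne_of_not_adj hne hadj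
  rcases (G.commonNeighbors u v).eq_empty_or_nonempty with hcommon | ⟨w, huw, hvw⟩
  · calc
      ((f u).1 ∩ (f v).1).card ≤ (f u).1.card := Finset.card_le_card Finset.inter_subset_left
      _ = 2 := hcard u
      _ < G.dist u v := two_lt_dist_of_commonNeighbors_eq_empty hne hr hadj hcommon
  · have hfne : (f u).1 ≠ (f v).1 := fun h =>
      hne (hf w huw.symm hvw.symm (Subtype.ext h))
    exact (card_inter_lt_of_ne (hcard u) (hcard v) hfne).trans_le hdist

end Tone

theorem stmt9_general {V : Type*} {G : SimpleGraph V} [G.LocallyFinite] (hG : G.IsAcyclic) {k : ℕ}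
    (hk : 2 ≤ k) (hdeg : ∀ v, G.degree v ≤ (k - 2).choose 2) :
    ∃ f : V → Finset ℕ, IsTToneColoring G 2 k f := by
  classical
  have : Nonempty ((Finset.Icc 1 k).powersetCard 2) :=
    (Finset.powersetCard_nonempty.mpr (by simpa using hk)).to_subtype
  have hstar (v : V) (A : (Finset.Icc 1 k).powersetCard 2) :
      Nonempty (G.neighborSet v ↪ (kneserGraph (Finset.Icc 1 k) 2).neighborSet A) := by
    apply Function.Embedding.nonempty_of_card_le
    rw [card_neighborSet_eq_degree, card_neighborSet_eq_degree, degree_kneserGraph two_ne_zero,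
      Nat.card_Icc, Nat.add_sub_cancel]
    exact hdeg v
  obtain ⟨f, hf⟩ := exists_hom_injOn_neighborSet_of_isAcyclic hG hstar
  exact ⟨_, isTToneColoring_two_of_hom_kneserGraph f hf⟩

/-- Every finite tree with at least two vertices and maximum degree at most 3
admits a 2-tone 5-coloring. -/
theorem stmt9 {V : Type*} [Fintype V] (G : SimpleGraph V) [DecidableRel G.Adj]
    (hT : G.IsTree) (hcard : 2 ≤ Fintype.card V) (hΔ : G.maxDegree ≤ 3) :
    ∃ f : V → Finset ℕ, IsTToneColoring G 2 5 f :=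
  stmt9_general hT.isAcyclic (by decide) fun v => (G.degree_le_maxDegree v).trans hΔ
end
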